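/- arXiv:2311.18745 — 3 statements merged into one kernel-verified Lean document; each statement's English description precedes it below -/
import Mathlib

section
/- Let k be a field, V a k-vector space, d : V → V a linear map with d ∘ d = 0, and let {0} = F_0 ⊆ F_1 ⊆ ... ⊆ F_n = V be a filtration by subspaces with d(F_i) ⊆ F_i for every i. If x ∈ ker d and x ∉ im d (i.e. the homology class of x is nonzero), then there exist an index i with 1 ≤ i ≤ n and an element y ∈ V such that x − d(y) lies in F_i and the image of x − d(y) in the quotient F_i/F_{i−1} is a cycle for the induced differential whose homology class in H(F_i/F_{i−1}) is nonzero. -/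
/-- Given a differential `d` on `M` and a family of `d`-invariant submodules `F`,
the differential induced by `d` on the filtration quotient `F i / F (i-1)`. -/
noncomputable def inducedDiff {k M : Type*} [Field k] [AddCommGroup M] [Module k M]
    (d : M →ₗ[k] M) (F : ℕ → Submodule k M)
    (hdF : ∀ i, ∀ x ∈ F i, d x ∈ F i) (i : ℕ) :
    ((F i) ⧸ (F (i - 1)).comap (F i).subtype) →ₗ[k]
      ((F i) ⧸ (F (i - 1)).comap (F i).subtype) :=
  Submodule.mapQ _ _ (d.restrict (hdF i)) (by
    intro x hx
    simp only [Submodule.mem_comap, LinearMap.restrict_coe_apply] at *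
    exact hdF (i - 1) _ hx)

/-- If `{0} = F 0 ⊆ F 1 ⊆ ... ⊆ F n = V` is a filtration of a complex `(V, d)` by
`d`-invariant subspaces and `x` is a cycle whose homology class is nonzero, then, after
modifying `x` by a boundary `d y`, it lands in some `F i` (`1 ≤ i ≤ n`) and its image in
`F i / F (i-1)` is a cycle with nonzero homology class for the induced differential. -/
theorem exists_nonzero_class_in_filtration_quotient
    {k M : Type*} [Field k] [AddCommGroup M] [Module k M]
    (d : M →ₗ[k] M) (hd2 : d ∘ₗ d = 0) (n : ℕ)
    (F : ℕ → Submodule k M) (hF0 : F 0 = ⊥) (hFn : F n = ⊤) (hmono : Monotone F)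
    (hdF : ∀ i, ∀ x ∈ F i, d x ∈ F i)
    (x : M) (hx : d x = 0) (hx' : x ∉ LinearMap.range d) :
    ∃ i, 1 ≤ i ∧ i ≤ n ∧ ∃ y : M, ∃ h : x - d y ∈ F i,
      inducedDiff d F hdF i (Submodule.Quotient.mk ⟨x - d y, h⟩) = 0 ∧
      Submodule.Quotient.mk ⟨x - d y, h⟩ ∉
        LinearMap.range (inducedDiff d F hdF i) := by
  classical
  have hex : ∃ i, ∃ y, x - d y ∈ F i := ⟨n, 0, by simp [hFn]⟩
  have hpos : 1 ≤ Nat.find hex := by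
    by_contra hlt
    obtain ⟨y, hy⟩ := Nat.find_spec hex
    rw [show Nat.find hex = 0 by omega, hF0, Submodule.mem_bot, sub_eq_zero] at hy
    exact hx' ⟨y, hy.symm⟩
  obtain ⟨y, hy⟩ := Nat.find_spec hex
  refine ⟨Nat.find hex, hpos, Nat.find_min' hex ⟨0, by simp [hFn]⟩, y, hy, ?_, ?_⟩
  · have hcycle : d (x - d y) = 0 := by
      rw [map_sub, hx, ← LinearMap.comp_apply, hd2, LinearMap.zero_apply, sub_zero]
    refine (Submodule.Quotient.mk_eq_zero _).2 ?_
    simp [hcycle]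
  · rintro ⟨q, hq⟩
    obtain ⟨z, rfl⟩ := Submodule.Quotient.mk_surjective _ q
    have hmem : d z - (x - d y) ∈ F (Nat.find hex - 1) :=
      (Submodule.Quotient.eq ((F (Nat.find hex - 1)).comap (F (Nat.find hex)).subtype)).1 hq
    refine Nat.find_min hex (Nat.sub_lt hpos one_pos) ⟨y + z, ?_⟩
    rw [← neg_mem_iff]
    convert hmem using 1
    rw [map_add]
    abel
end

section
/- Let k be a field, V a k-vector space, d : V → V a linear map with d ∘ d = 0, and let {0} = F_0 ⊆ F_1 ⊆ ... ⊆ F_n = V be a filtration by subspaces with d(F_i) ⊆ F_i for every i. If the homology of every filtration quotient vanishes, i.e. H(F_i/F_{i−1}) = 0 for all i = 1, ..., n, then the homology of (V, d) vanishes: ker d = im d. -/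
/-- If the induced differential on `F i / F (i-1)` is exact, every cycle in `F i` is a
boundary modulo `F (i-1)`. -/
theorem exists_sub_mem_of_inducedDiff_exact
    {k M : Type*} [Field k] [AddCommGroup M] [Module k M]
    (d : M →ₗ[k] M) (F : ℕ → Submodule k M) (hdF : ∀ i, ∀ x ∈ F i, d x ∈ F i) (i : ℕ)
    (hH : LinearMap.ker (inducedDiff d F hdF i) ≤ LinearMap.range (inducedDiff d F hdF i))
    {x : M} (hx : x ∈ F i) (hdx : d x = 0) :
    ∃ y, x - d y ∈ F (i - 1) := by
  have hker : Submodule.Quotient.mk ⟨x, hx⟩ ∈ LinearMap.ker (inducedDiff d F hdF i) := by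
    rw [LinearMap.mem_ker, inducedDiff, Submodule.mapQ_apply, Submodule.Quotient.mk_eq_zero]
    simp [hdx]
  obtain ⟨q, hq⟩ := hH hker
  obtain ⟨y, rfl⟩ := Submodule.Quotient.mk_surjective _ q
  rw [inducedDiff, Submodule.mapQ_apply, eq_comm, Submodule.Quotient.eq] at hq
  exact ⟨y, by simpa using hq⟩

/-- If `{0} = F 0 ⊆ F 1 ⊆ ... ⊆ F n = V` is a filtration of a complex `(V, d)` by
`d`-invariant subspaces and the homology of every filtration quotient vanishes
(every cycle of the induced differential is a boundary), then the homology of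
`(V, d)` vanishes: `ker d = im d`. -/
theorem homology_eq_zero_of_filtration_quotients
    {k M : Type*} [Field k] [AddCommGroup M] [Module k M]
    (d : M →ₗ[k] M) (hd2 : d ∘ₗ d = 0) (n : ℕ)
    (F : ℕ → Submodule k M) (hF0 : F 0 = ⊥) (hFn : F n = ⊤) (hmono : Monotone F)
    (hdF : ∀ i, ∀ x ∈ F i, d x ∈ F i)
    (hH : ∀ i, 1 ≤ i → i ≤ n →
      LinearMap.ker (inducedDiff d F hdF i) ≤ LinearMap.range (inducedDiff d F hdF i)) :
    LinearMap.ker d = LinearMap.range d := by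
  refine le_antisymm (fun x hx => ?_) (LinearMap.range_le_ker_iff.mpr hd2)
  have cycle_mem_range : ∀ i ≤ n, ∀ x ∈ F i, d x = 0 → x ∈ LinearMap.range d := by
    intro i
    induction i with
    | zero =>
      intro _ x hx _
      rw [hF0, Submodule.mem_bot] at hx
      exact hx ▸ zero_mem _
    | succ i ih =>
      intro hi x hx hdx
      obtain ⟨y, hy⟩ :=
        exists_sub_mem_of_inducedDiff_exact d F hdF (i + 1) (hH _ (by omega) hi) hx hdx
      have hddy : d (d y) = 0 := LinearMap.congr_fun hd2 y
      have hmem := ih (by omega) _ hy (by rw [map_sub, hdx, hddy, sub_zero])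
      simpa using add_mem hmem (LinearMap.mem_range_self d y)
  exact cycle_mem_range n le_rfl x (hFn ▸ Submodule.mem_top) hx
end

section
/- Let n ≥ 1 be a natural number. In the free Lie algebra over ℚ on n generators x_0, ..., x_{n−1}, the family of (n−1)! iterated brackets indexed by permutations σ of {0, ..., n−2}, where the element associated to σ is the right-nested bracket [x_{σ(0)}, [x_{σ(1)}, [ ..., [x_{σ(n−2)}, x_{n−1}] ... ]]] (with the fixed generator x_{n−1} innermost), is linearly independent. -/
/-- The right-nested iterated bracket
`[x_{σ(0)}, [x_{σ(1)}, [ …, [x_{σ(n-2)}, x_{n-1}] … ]]]` in the free Lie algebra over `ℚ`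
on `n` generators, associated to a permutation `σ` of `{0, …, n-2}` (for `n = 1` it is
just the generator `x_0`). -/
noncomputable def rightNestedBracket (n : ℕ) (hn : 1 ≤ n)
    (σ : Equiv.Perm (Fin (n - 1))) : FreeLieAlgebra ℚ (Fin n) :=
  (List.ofFn fun j : Fin (n - 1) => Fin.castLE (Nat.sub_le n 1) (σ j)).foldr
    (fun i acc => ⁅FreeLieAlgebra.of ℚ i, acc⁆)
    (FreeLieAlgebra.of ℚ ⟨n - 1, by omega⟩)

/-- The operator on the space with basis the words in `X` that prepends the letter `i`, except that
the empty word is sent to `0` when `i ≠ a`. -/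
noncomputable def prependOperator (R : Type*) [CommRing R] {X : Type*} [DecidableEq X] (a i : X) :
    Module.End R (List X →₀ R) :=
  Finsupp.linearCombination R fun w : List X =>
    if w = [] ∧ i ≠ a then 0 else Finsupp.single (i :: w) (1 : R)

section

attribute [local instance] LieRing.ofAssociativeRing

/-- The action of the free Lie algebra on the empty word through `prependOperator`. -/
noncomputable def actOnEmptyWord (R : Type*) [CommRing R] {X : Type*} [DecidableEq X] (a : X) :
    FreeLieAlgebra R X →ₗ[R] (List X →₀ R) :=
  LinearMap.applyₗ (Finsupp.single [] (1 : R)) ∘ₗ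
    (FreeLieAlgebra.lift R (prependOperator R a)).toLinearMap

/-- A right-nested bracket ending in `a` whose other letters differ from `a` sends the empty word to
the word of its letters. -/
theorem actOnEmptyWord_foldr_lie (R : Type*) [CommRing R] {X : Type*} [DecidableEq X] (a : X)
    (l : List X) (hl : a ∉ l) :
    actOnEmptyWord R a
        (l.foldr (fun i acc => ⁅FreeLieAlgebra.of R i, acc⁆) (FreeLieAlgebra.of R a)) =
      Finsupp.single (l ++ [a]) 1 := by
  induction l with
  | nil => simp [actOnEmptyWord, prependOperator]
  | cons i l ih =>
    rw [List.mem_cons, not_or] at hl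
    have h := ih hl.2
    simp only [actOnEmptyWord, LinearMap.comp_apply, LinearMap.applyₗ_apply_apply,
      LieHom.coe_toLinearMap] at h
    simp [actOnEmptyWord, LieRing.of_associative_ring_bracket, h, prependOperator, Ne.symm hl.1]

end

/-- In the free Lie algebra over `ℚ` on `n ≥ 1` generators, the `(n-1)!` right-nested
brackets `[x_{σ(0)}, [x_{σ(1)}, [ …, [x_{σ(n-2)}, x_{n-1}] … ]]]`, indexed by
permutations `σ` of `{0, …, n-2}`, are linearly independent.
(This is the linear-independence half of `dim Lie(n) = (n-1)!`.) -/
theorem rightNestedBrackets_linearIndependent (n : ℕ) (hn : 1 ≤ n) :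
    LinearIndependent ℚ (fun σ : Equiv.Perm (Fin (n - 1)) =>
      rightNestedBracket n hn σ) := by
  refine LinearIndependent.of_comp (actOnEmptyWord ℚ (⟨n - 1, by omega⟩ : Fin n)) ?_
  have hcomp : (actOnEmptyWord ℚ (⟨n - 1, by omega⟩ : Fin n) ∘ fun σ => rightNestedBracket n hn σ) =
      (fun w => Finsupp.single w (1 : ℚ)) ∘ fun σ : Equiv.Perm (Fin (n - 1)) =>
        (List.ofFn fun j => Fin.castLE (Nat.sub_le n 1) (σ j)) ++ [⟨n - 1, by omega⟩] := by
    funext σ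
    refine actOnEmptyWord_foldr_lie ℚ _ _ ?_
    simp only [List.mem_ofFn, not_exists, Fin.ext_iff, Fin.val_castLE]
    exact fun j => (σ j).isLt.ne
  rw [hcomp]
  refine (Finsupp.linearIndependent_single_one ℚ _).comp _ fun σ τ h => ?_
  have hfun := List.ofFn_injective (List.append_cancel_right h)
  exact Equiv.ext fun j => Fin.castLE_injective _ (congrFun hfun j)
end
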